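/- With u = (1/3)a² − b, there exist nonzero rational numbers C, C₁, C₂ such that, in U(𝔤), modulo the left ideal U(𝔤)𝔫₊: (E₂₁²F₂₁⁴)_L(u) ≡ C·H₂₁(H₂₁+2); (E₁₀²F₃₁²)_L(u) ≡ C₁·H₁₀(H₁₀−1); (E₁₁²F₃₂²)_L(u) ≡ C₂·((1/3)H₁₁(H₁₁−1) + 3H₀₁). -/

import Mathlib

/-- The canonical embedding of a Lie algebra into its universal enveloping algebra. -/
noncomputable def ιU {L : Type*} [LieRing L] [LieAlgebra ℂ L] (x : L) :
    UniversalEnvelopingAlgebra ℂ L :=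
  UniversalEnvelopingAlgebra.ι ℂ x

/-- The adjoint action `X_L : f ↦ Xf − fX` of `X ∈ L` on `U(L)`. -/
noncomputable def adU {L : Type*} [LieRing L] [LieAlgebra ℂ L] (x : L)
    (f : UniversalEnvelopingAlgebra ℂ L) : UniversalEnvelopingAlgebra ℂ L :=
  ιU x * f - f * ιU x

/-- A Lie algebra over `ℂ` equipped with Chevalley generators of type `G₂`:
`E₁₀, F₁₀, H₁₀` correspond to the short simple root `α` and `E₀₁, F₀₁, H₀₁` to the long
simple root `β`, subject to the Chevalley relations and the Serre relations, and the
generators generate the Lie algebra.  (By Serre's theorem such a Lie algebra is a quotient of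
the simple Lie algebra of type `G₂`.) -/
structure G2Gens (L : Type*) [LieRing L] [LieAlgebra ℂ L] where
  E10 : L
  E01 : L
  F10 : L
  F01 : L
  H10 : L
  H01 : L
  hH10H01 : ⁅H10, H01⁆ = 0
  hE10F10 : ⁅E10, F10⁆ = H10
  hE01F01 : ⁅E01, F01⁆ = H01
  hE10F01 : ⁅E10, F01⁆ = 0
  hE01F10 : ⁅E01, F10⁆ = 0
  hH10E10 : ⁅H10, E10⁆ = (2 : ℂ) • E10
  hH01E01 : ⁅H01, E01⁆ = (2 : ℂ) • E01
  hH10E01 : ⁅H10, E01⁆ = (-3 : ℂ) • E01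
  hH01E10 : ⁅H01, E10⁆ = (-1 : ℂ) • E10
  hH10F10 : ⁅H10, F10⁆ = (-2 : ℂ) • F10
  hH01F01 : ⁅H01, F01⁆ = (-2 : ℂ) • F01
  hH10F01 : ⁅H10, F01⁆ = (3 : ℂ) • F01
  hH01F10 : ⁅H01, F10⁆ = (1 : ℂ) • F10
  serreE1 : ⁅E10, ⁅E10, ⁅E10, ⁅E10, E01⁆⁆⁆⁆ = 0
  serreE2 : ⁅E01, ⁅E01, E10⁆⁆ = 0
  serreF1 : ⁅F10, ⁅F10, ⁅F10, ⁅F10, F01⁆⁆⁆⁆ = 0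
  serreF2 : ⁅F01, ⁅F01, F10⁆⁆ = 0
  generates : LieSubalgebra.lieSpan ℂ L {E10, E01, F10, F01, H10, H01} = ⊤

namespace G2Gens

variable {L : Type*} [LieRing L] [LieAlgebra ℂ L] (g : G2Gens L)

/-- The root vector `E₁₁ = [E₁₀, E₀₁]`. -/
def E11 : L := ⁅g.E10, g.E01⁆
/-- The root vector `E₂₁ = (1/2)[E₁₁, E₁₀]`. -/
noncomputable def E21 : L := (2 : ℂ)⁻¹ • ⁅g.E11, g.E10⁆
/-- The root vector `E₃₁ = (1/3)[E₂₁, E₁₀]`. -/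
noncomputable def E31 : L := (3 : ℂ)⁻¹ • ⁅g.E21, g.E10⁆
/-- The root vector `E₃₂ = [E₃₁, E₀₁]`. -/
noncomputable def E32 : L := ⁅g.E31, g.E01⁆
/-- The root vector `F₁₁ = [F₀₁, F₁₀]`. -/
def F11 : L := ⁅g.F01, g.F10⁆
/-- The root vector `F₂₁ = (1/2)[F₁₀, F₁₁]`. -/
noncomputable def F21 : L := (2 : ℂ)⁻¹ • ⁅g.F10, g.F11⁆
/-- The root vector `F₃₁ = (1/3)[F₁₀, F₂₁]`. -/
noncomputable def F31 : L := (3 : ℂ)⁻¹ • ⁅g.F10, g.F21⁆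
/-- The root vector `F₃₂ = [F₀₁, F₃₁]`. -/
noncomputable def F32 : L := ⁅g.F01, g.F31⁆
/-- The coroot `H₁₁ = H₁₀ + 3H₀₁`. -/
def H11 : L := g.H10 + (3 : ℂ) • g.H01
/-- The coroot `H₂₁ = 2H₁₀ + 3H₀₁`. -/
def H21 : L := (2 : ℂ) • g.H10 + (3 : ℂ) • g.H01
/-- The coroot `H₃₁ = H₁₀ + H₀₁`. -/
def H31 : L := g.H10 + g.H01
/-- The coroot `H₃₂ = H₁₀ + 2H₀₁`. -/
def H32 : L := g.H10 + (2 : ℂ) • g.H01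

/-- The element `a = E₂₁` of `U(𝔤)`. -/
noncomputable def aU : UniversalEnvelopingAlgebra ℂ L := ιU g.E21
/-- The element `b = E₃₁E₁₁ − E₃₂E₁₀` of `U(𝔤)`. -/
noncomputable def bU : UniversalEnvelopingAlgebra ℂ L :=
  ιU g.E31 * ιU g.E11 - ιU g.E32 * ιU g.E10
/-- The element `c = E₃₁²E₀₁ − E₃₂E₃₁H₀₁ − E₃₂²F₀₁` of `U(𝔤)`. -/
noncomputable def cU : UniversalEnvelopingAlgebra ℂ L :=
  ιU g.E31 * ιU g.E31 * ιU g.E01 - ιU g.E32 * ιU g.E31 * ιU g.H01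
    - ιU g.E32 * ιU g.E32 * ιU g.F01
/-- The element `u = (1/3)a² − b` of `U(𝔤)`. -/
noncomputable def uU : UniversalEnvelopingAlgebra ℂ L :=
  (3 : ℂ)⁻¹ • (g.aU * g.aU) - g.bU
/-- The element `v = (2/9)a³ − ab − 3c` of `U(𝔤)`. -/
noncomputable def vU : UniversalEnvelopingAlgebra ℂ L :=
  ((2 : ℂ) / 9) • (g.aU * g.aU * g.aU) - g.aU * g.bU - (3 : ℂ) • g.cU

/-- `f ≡ h (mod U(𝔤)𝔫₊)`:  `f − h` lies in the left ideal of `U(𝔤)` generated by `E₁₀`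
and `E₀₁`. -/
def EqModN (f h : UniversalEnvelopingAlgebra ℂ L) : Prop :=
  ∃ A B : UniversalEnvelopingAlgebra ℂ L, f - h = A * ιU g.E10 + B * ιU g.E01

end G2Gens

/-!
Write `J = U(𝔤)𝔫₊`. For a positive root `γ`, the operator `(E_γ)_L` preserves the left ideal `J`,
so `u` may be lowered modulo `J` first and raised afterwards. In each of the three cases the
lowered element has weight `-2γ` and is, modulo `J`, a multiple of `F_γ²` plus a few products
`y z` of distinct negative root vectors with `[E_γ, z] ∈ 𝔫₊`. The first contributes through the
`sl₂`-identity `(E_γ²)_L(F_γ²) ≡ 2 H_γ (H_γ - 1)`. For the others every term of the Leibniz rule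
that differentiates `z` lies in `J`, which leaves `[E_γ, [E_γ, y]] z`; here
`[E_γ, [E_γ, y]] ∈ 𝔫₊`, so modulo `J` only the bracket `[[E_γ, [E_γ, y]], z]` survives, which is
a multiple of a coroot.
-/

section LieBracket

variable {R L : Type*} [CommRing R] [LieRing L] [LieAlgebra R L]

lemma lie_lie_eq_add_smul {h x y : L} {a b : R} (hx : ⁅h, x⁆ = a • x) (hy : ⁅h, y⁆ = b • y) :
    ⁅h, ⁅x, y⁆⁆ = (a + b) • ⁅x, y⁆ := by
  rw [leibniz_lie, hx, hy, smul_lie, lie_smul, add_smul]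

end LieBracket

@[gcongr]
lemma smodEq_smul_of_tower {S R M : Type*} [Ring S] [Ring R] [AddCommGroup M] [Module R M]
    [Module S M] [SMul S R] [IsScalarTower S R M] {N : Submodule R M} {x y : M}
    (h : x ≡ y [SMOD N]) (c : S) : c • x ≡ c • y [SMOD N] :=
  (SModEq.restrictScalars S).mp (((SModEq.restrictScalars S).mpr h).smul c)

section Adjoint

variable {L : Type*} [LieRing L] [LieAlgebra ℂ L]

lemma ιU_add (x y : L) : ιU (x + y) = ιU x + ιU y := map_add _ x y

lemma ιU_smul (c : ℂ) (x : L) : ιU (c • x) = c • ιU x := map_smul _ c x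

lemma ιU_neg (x : L) : ιU (-x) = -ιU x := map_neg (UniversalEnvelopingAlgebra.ι ℂ) x

lemma ιU_zero : ιU (0 : L) = 0 := map_zero (UniversalEnvelopingAlgebra.ι ℂ)

lemma ιU_lie (x y : L) : ιU ⁅x, y⁆ = ιU x * ιU y - ιU y * ιU x := by
  simp only [ιU, LieHom.map_lie, LieRing.of_associative_ring_bracket]

lemma ιU_mul_comm_of_lie_eq_zero {x y : L} (h : ⁅x, y⁆ = 0) : ιU x * ιU y = ιU y * ιU x := by
  rw [← sub_eq_zero, ← ιU_lie, h, ιU_zero]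

/-- The adjoint operator `adU x` bundled as a linear endomorphism of `U(L)`. -/
noncomputable def adULinear (x : L) : Module.End ℂ (UniversalEnvelopingAlgebra ℂ L) :=
  LinearMap.mulLeft ℂ (ιU x) - LinearMap.mulRight ℂ (ιU x)

lemma adU_iterate (x : L) (n : ℕ) : (adU x)^[n] = ⇑(adULinear x ^ n) :=
  (Module.End.coe_pow (adULinear x) n).symm

lemma adULinear_ιU (x y : L) : adULinear x (ιU y) = ιU ⁅x, y⁆ := (ιU_lie x y).symm

lemma adULinear_mul (x : L) (f h : UniversalEnvelopingAlgebra ℂ L) :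
    adULinear x (f * h) = adULinear x f * h + f * adULinear x h := by
  simp only [adULinear, LinearMap.sub_apply, LinearMap.mulLeft_apply, LinearMap.mulRight_apply]
  noncomm_ring

lemma adU_iterate_two_mul (x y z : L) :
    (adU x)^[2] (ιU y * ιU z) = ιU ⁅x, ⁅x, y⁆⁆ * ιU z + (2 : ℂ) • (ιU ⁅x, y⁆ * ιU ⁅x, z⁆) +
      ιU y * ιU ⁅x, ⁅x, z⁆⁆ := by
  simp only [adU_iterate, pow_succ', pow_zero, mul_one, Module.End.mul_apply, adULinear_mul,
    adULinear_ιU, map_add]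
  module

lemma adU_iterate_four_mul (x y z : L) :
    (adU x)^[4] (ιU y * ιU z) = ιU ⁅x, ⁅x, ⁅x, ⁅x, y⁆⁆⁆⁆ * ιU z +
      (4 : ℂ) • (ιU ⁅x, ⁅x, ⁅x, y⁆⁆⁆ * ιU ⁅x, z⁆) +
      (6 : ℂ) • (ιU ⁅x, ⁅x, y⁆⁆ * ιU ⁅x, ⁅x, z⁆⁆) +
      (4 : ℂ) • (ιU ⁅x, y⁆ * ιU ⁅x, ⁅x, ⁅x, z⁆⁆⁆) + ιU y * ιU ⁅x, ⁅x, ⁅x, ⁅x, z⁆⁆⁆⁆ := by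
  simp only [adU_iterate, pow_succ', pow_zero, mul_one, Module.End.mul_apply, adULinear_mul,
    adULinear_ιU, map_add]
  module

end Adjoint

section LeftIdeal

variable {L : Type*} [LieRing L] [LieAlgebra ℂ L]
  {J : Ideal (UniversalEnvelopingAlgebra ℂ L)} {x y z : L}

lemma ιU_lie_mem (hx : ιU x ∈ J) (hy : ιU y ∈ J) : ιU ⁅x, y⁆ ∈ J := by
  rw [ιU_lie]
  exact J.sub_mem (J.mul_mem_left _ hy) (J.mul_mem_left _ hx)

lemma ιU_mul_smodEq_ιU_lie (hx : ιU x ∈ J) (y : L) :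
    ιU x * ιU y ≡ ιU ⁅x, y⁆ [SMOD J] := by
  rw [SModEq.sub_mem, ιU_lie, sub_sub_cancel]
  exact J.mul_mem_left _ hx

lemma adU_iterate_smodEq {f h : UniversalEnvelopingAlgebra ℂ L} (hx : ιU x ∈ J)
    (hfh : f ≡ h [SMOD J]) (n : ℕ) : (adU x)^[n] f ≡ (adU x)^[n] h [SMOD J] := by
  have adU_mem {k} (hk : k ∈ J) : adU x k ∈ J :=
    J.sub_mem (J.mul_mem_left _ hk) (J.mul_mem_left _ hx)
  rw [SModEq.sub_mem] at hfh ⊢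
  rw [adU_iterate, ← map_sub, ← adU_iterate]
  exact Set.MapsTo.iterate (fun _ ↦ adU_mem) n hfh

lemma adU_iterate_two_mul_smodEq (hx : ιU x ∈ J) (y : L) (hxz : ιU ⁅x, z⁆ ∈ J) :
    (adU x)^[2] (ιU y * ιU z) ≡ ιU ⁅x, ⁅x, y⁆⁆ * ιU z [SMOD J] := by
  rw [adU_iterate_two_mul, add_assoc, SModEq.sub_mem, add_sub_cancel_left]
  exact J.add_mem (J.smul_of_tower_mem _ (J.mul_mem_left _ hxz))
    (J.mul_mem_left _ (ιU_lie_mem hx hxz))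

lemma adU_iterate_two_mul_self_smodEq {e f h : L} (hef : ⁅e, f⁆ = h) (hhe : ⁅h, e⁆ = (2 : ℂ) • e)
    (he : ιU e ∈ J) :
    (adU e)^[2] (ιU f * ιU f) ≡ (2 : ℂ) • (ιU h * (ιU h - 1)) [SMOD J] := by
  have heh : ⁅e, h⁆ = (-2 : ℂ) • e := by rw [← lie_skew, hhe, neg_smul]
  have hef' : ιU e * ιU f = ιU f * ιU e + ιU h := by rw [← hef, ιU_lie, add_sub_cancel]
  have exact_value : (adU e)^[2] (ιU f * ιU f) =
      (2 : ℂ) • (ιU h * (ιU h - 1)) + (-4 : ℂ) • (ιU f * ιU e) := by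
    simp only [adU_iterate_two_mul, hef, heh, ιU_smul, smul_mul_assoc, mul_smul_comm, hef',
      mul_sub, mul_one]
    module
  rw [SModEq.sub_mem, exact_value, add_sub_cancel_left]
  exact J.smul_of_tower_mem _ (J.mul_mem_left _ he)

end LeftIdeal

namespace G2Gens

variable {L : Type*} [LieRing L] [LieAlgebra ℂ L] (g : G2Gens L)

section Weights

lemma lie_H10_E11 : ⁅g.H10, g.E11⁆ = (-1 : ℂ) • g.E11 := by
  rw [E11, lie_lie_eq_add_smul g.hH10E10 g.hH10E01]; norm_num

lemma lie_H01_E11 : ⁅g.H01, g.E11⁆ = (1 : ℂ) • g.E11 := by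
  rw [E11, lie_lie_eq_add_smul g.hH01E10 g.hH01E01]; norm_num

lemma lie_H10_E21 : ⁅g.H10, g.E21⁆ = (1 : ℂ) • g.E21 := by
  rw [E21, lie_smul, lie_lie_eq_add_smul g.lie_H10_E11 g.hH10E10]; module

lemma lie_H01_E21 : ⁅g.H01, g.E21⁆ = (0 : ℂ) • g.E21 := by
  rw [E21, lie_smul, lie_lie_eq_add_smul g.lie_H01_E11 g.hH01E10]; module

lemma lie_H10_F11 : ⁅g.H10, g.F11⁆ = (1 : ℂ) • g.F11 := by
  rw [F11, lie_lie_eq_add_smul g.hH10F01 g.hH10F10]; norm_num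

lemma lie_H01_F11 : ⁅g.H01, g.F11⁆ = (-1 : ℂ) • g.F11 := by
  rw [F11, lie_lie_eq_add_smul g.hH01F01 g.hH01F10]; norm_num

lemma lie_H10_F21 : ⁅g.H10, g.F21⁆ = (-1 : ℂ) • g.F21 := by
  rw [F21, lie_smul, lie_lie_eq_add_smul g.hH10F10 g.lie_H10_F11]; module

lemma lie_H01_F21 : ⁅g.H01, g.F21⁆ = (0 : ℂ) • g.F21 := by
  rw [F21, lie_smul, lie_lie_eq_add_smul g.hH01F10 g.lie_H01_F11]; module

lemma lie_H01_F31 : ⁅g.H01, g.F31⁆ = (1 : ℂ) • g.F31 := by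
  rw [F31, lie_smul, lie_lie_eq_add_smul g.hH01F10 g.lie_H01_F21]; module

lemma lie_H11_E11 : ⁅g.H11, g.E11⁆ = (2 : ℂ) • g.E11 := by
  rw [H11, add_lie, smul_lie, lie_H10_E11, lie_H01_E11]; module

lemma lie_H21_E21 : ⁅g.H21, g.E21⁆ = (2 : ℂ) • g.E21 := by
  rw [H21, add_lie, smul_lie, smul_lie, lie_H10_E21, lie_H01_E21]; module

lemma lie_H21_F21 : ⁅g.H21, g.F21⁆ = (-2 : ℂ) • g.F21 := by
  rw [H21, add_lie, smul_lie, smul_lie, lie_H10_F21, lie_H01_F21]; module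

lemma lie_H11_E10 : ⁅g.H11, g.E10⁆ = (-1 : ℂ) • g.E10 := by
  rw [H11, add_lie, smul_lie, g.hH10E10, g.hH01E10]; module

lemma lie_H21_E10 : ⁅g.H21, g.E10⁆ = (1 : ℂ) • g.E10 := by
  rw [H21, add_lie, smul_lie, smul_lie, g.hH10E10, g.hH01E10]; module

lemma lie_H31_E01 : ⁅g.H31, g.E01⁆ = (-1 : ℂ) • g.E01 := by
  rw [H31, add_lie, g.hH10E01, g.hH01E01]; module

end Weights

section NegativeRootVectors

lemma lie_F10_F11 : ⁅g.F10, g.F11⁆ = (2 : ℂ) • g.F21 := by rw [F21]; module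

lemma lie_F10_F21 : ⁅g.F10, g.F21⁆ = (3 : ℂ) • g.F31 := by rw [F31]; module

lemma lie_F10_F31 : ⁅g.F10, g.F31⁆ = 0 := by
  have h : ⁅g.F10, ⁅g.F10, ⁅g.F10, g.F11⁆⁆⁆ = 0 := by
    rw [F11, ← lie_skew g.F01 g.F10]
    simp only [lie_neg, g.serreF1, neg_zero]
  simpa [lie_F10_F11, lie_F10_F21] using h

lemma lie_F01_F11 : ⁅g.F01, g.F11⁆ = 0 := g.serreF2

lemma lie_F01_F21 : ⁅g.F01, g.F21⁆ = 0 := by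
  rw [F21, lie_smul, leibniz_lie, ← F11, lie_self, lie_F01_F11, lie_zero, add_zero, smul_zero]

lemma lie_F11_F21 : ⁅g.F11, g.F21⁆ = (3 : ℂ) • g.F32 := by
  rw [F11, lie_lie, lie_F10_F21, lie_F01_F21, lie_smul, lie_zero, sub_zero, F32]

lemma F32_eq_smul_lie : g.F32 = (3 : ℂ)⁻¹ • ⁅g.F11, g.F21⁆ := by
  rw [lie_F11_F21]; module

lemma lie_F11_F31 : ⁅g.F11, g.F31⁆ = 0 := by
  -- The two expressions for `F₃₂` as a bracket give opposite values of `[F₁₀, F₃₂]`.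
  have from_F01_F31 : ⁅g.F10, g.F32⁆ = -⁅g.F11, g.F31⁆ := by
    rw [F32, leibniz_lie, lie_F10_F31, lie_zero, add_zero, ← lie_skew g.F10, neg_lie, F11]
  have from_F11_F21 : ⁅g.F10, g.F32⁆ = ⁅g.F11, g.F31⁆ := by
    rw [F32_eq_smul_lie, lie_smul, leibniz_lie, lie_F10_F11, lie_F10_F21, smul_lie, lie_self,
      lie_smul]
    module
  linear_combination (norm := module) (2 : ℂ)⁻¹ • (from_F01_F31 - from_F11_F21)

lemma lie_F10_F32 : ⁅g.F10, g.F32⁆ = 0 := by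
  rw [F32_eq_smul_lie, lie_smul, leibniz_lie, lie_F10_F11, lie_F10_F21, smul_lie, lie_self,
    lie_smul, lie_F11_F31]
  module

lemma lie_F01_F32 : ⁅g.F01, g.F32⁆ = 0 := by
  rw [F32_eq_smul_lie, lie_smul, leibniz_lie, lie_F01_F11, lie_F01_F21, zero_lie, lie_zero,
    add_zero, smul_zero]

lemma lie_F11_F32 : ⁅g.F11, g.F32⁆ = 0 := by
  rw [F11, lie_lie, lie_F10_F32, lie_F01_F32, lie_zero, lie_zero, sub_zero]

lemma lie_F21_F31 : ⁅g.F21, g.F31⁆ = 0 := by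
  rw [F21, smul_lie, lie_lie, lie_F11_F31, lie_F10_F31, lie_zero, lie_zero, sub_zero, smul_zero]

lemma lie_F21_F32 : ⁅g.F21, g.F32⁆ = 0 := by
  rw [F21, smul_lie, lie_lie, lie_F11_F32, lie_F10_F32, lie_zero, lie_zero, sub_zero, smul_zero]

end NegativeRootVectors

section MixedBrackets

lemma lie_E01_F11 : ⁅g.E01, g.F11⁆ = g.F10 := by
  rw [F11, leibniz_lie, g.hE01F01, g.hE01F10, g.hH01F10]; simp

lemma lie_E01_F21 : ⁅g.E01, g.F21⁆ = 0 := by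
  rw [F21, lie_smul, leibniz_lie, g.hE01F10, lie_E01_F11]; simp

lemma lie_E01_F31 : ⁅g.E01, g.F31⁆ = 0 := by
  rw [F31, lie_smul, leibniz_lie, g.hE01F10, lie_E01_F21]; simp

lemma lie_E01_F32 : ⁅g.E01, g.F32⁆ = g.F31 := by
  rw [F32, leibniz_lie, g.hE01F01, lie_E01_F31, lie_H01_F31]; simp

lemma lie_E10_F11 : ⁅g.E10, g.F11⁆ = (-3 : ℂ) • g.F01 := by
  rw [F11, leibniz_lie, g.hE10F01, g.hE10F10, ← lie_skew g.F01, g.hH10F01, zero_lie]; module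

lemma lie_E10_F21 : ⁅g.E10, g.F21⁆ = (2 : ℂ) • g.F11 := by
  rw [F21, lie_smul, leibniz_lie, g.hE10F10, lie_E10_F11, lie_H10_F11, lie_smul,
    ← lie_skew g.F10, ← F11]
  module

lemma lie_E10_F31 : ⁅g.E10, g.F31⁆ = g.F21 := by
  rw [F31, lie_smul, leibniz_lie, g.hE10F10, lie_E10_F21, lie_H10_F21, lie_smul, lie_F10_F11]
  module

lemma lie_E10_F32 : ⁅g.E10, g.F32⁆ = 0 := by
  rw [F32, leibniz_lie, g.hE10F01, lie_E10_F31, lie_F01_F21, zero_lie, add_zero]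

lemma lie_E11_F10 : ⁅g.E11, g.F10⁆ = (-3 : ℂ) • g.E01 := by
  rw [E11, lie_lie, g.hE01F10, g.hE10F10, ← lie_skew g.E01, g.hH10E01]; simp

lemma lie_E11_F01 : ⁅g.E11, g.F01⁆ = g.E10 := by
  rw [E11, lie_lie, g.hE01F01, g.hE10F01, ← lie_skew g.E10, g.hH01E10]; simp

lemma lie_E11_F11 : ⁅g.E11, g.F11⁆ = g.H11 := by
  rw [E11, lie_lie, lie_E01_F11, lie_E10_F11, lie_smul, g.hE10F10, g.hE01F01, H11]; module

lemma lie_E11_F21 : ⁅g.E11, g.F21⁆ = (-2 : ℂ) • g.F10 := by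
  rw [E11, lie_lie, lie_E01_F21, lie_E10_F21, lie_smul, lie_E01_F11, lie_zero]; module

lemma lie_E11_F31 : ⁅g.E11, g.F31⁆ = 0 := by
  rw [E11, lie_lie, lie_E01_F31, lie_E10_F31, lie_E01_F21, lie_zero, sub_zero]

lemma lie_E11_F32 : ⁅g.E11, g.F32⁆ = g.F21 := by
  rw [E11, lie_lie, lie_E01_F32, lie_E10_F32, lie_E10_F31, lie_zero, sub_zero]

lemma lie_E21_F10 : ⁅g.E21, g.F10⁆ = (2 : ℂ) • g.E11 := by
  rw [E21, smul_lie, lie_lie, g.hE10F10, lie_E11_F10, lie_smul, ← E11, ← lie_skew g.E11,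
    lie_H10_E11]
  module

lemma lie_E21_F11 : ⁅g.E21, g.F11⁆ = (-2 : ℂ) • g.E10 := by
  rw [E21, smul_lie, lie_lie, lie_E10_F11, lie_E11_F11, lie_smul, lie_E11_F01,
    ← lie_skew g.E10, lie_H11_E10]
  module

lemma lie_E21_F21 : ⁅g.E21, g.F21⁆ = g.H21 := by
  rw [E21, smul_lie, lie_lie, lie_E10_F21, lie_E11_F21, lie_smul, lie_smul, lie_E11_F11,
    g.hE10F10, H11, H21]
  module

lemma lie_E21_F31 : ⁅g.E21, g.F31⁆ = (-1 : ℂ) • g.F10 := by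
  rw [E21, smul_lie, lie_lie, lie_E10_F31, lie_E11_F31, lie_E11_F21, lie_zero]; module

lemma lie_E21_F32 : ⁅g.E21, g.F32⁆ = (-1 : ℂ) • g.F11 := by
  rw [E21, smul_lie, lie_lie, lie_E10_F32, lie_E11_F32, lie_E10_F21, lie_zero]; module

lemma lie_E31_F21 : ⁅g.E31, g.F21⁆ = (-1 : ℂ) • g.E10 := by
  rw [E31, smul_lie, lie_lie, lie_E10_F21, lie_E21_F21, lie_smul, lie_E21_F11,
    ← lie_skew g.E10, lie_H21_E10]
  module

lemma lie_E31_F31 : ⁅g.E31, g.F31⁆ = g.H31 := by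
  rw [E31, smul_lie, lie_lie, lie_E10_F31, lie_E21_F31, lie_smul, lie_E21_F21, g.hE10F10, H21,
    H31]
  module

lemma lie_E31_F32 : ⁅g.E31, g.F32⁆ = (-1 : ℂ) • g.F01 := by
  rw [E31, smul_lie, lie_lie, lie_E10_F32, lie_E21_F32, lie_smul, lie_E10_F11, lie_zero]; module

lemma lie_E32_F21 : ⁅g.E32, g.F21⁆ = (-1 : ℂ) • g.E11 := by
  rw [E32, lie_lie, lie_E01_F21, lie_E31_F21, lie_smul, ← lie_skew g.E01, ← E11, lie_zero]
  module

lemma lie_E32_F31 : ⁅g.E32, g.F31⁆ = (-1 : ℂ) • g.E01 := by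
  rw [E32, lie_lie, lie_E01_F31, lie_E31_F31, ← lie_skew g.E01, lie_H31_E01, lie_zero]; module

end MixedBrackets

section RaisingIdeal

/-- The left ideal `U(𝔤)𝔫₊` of `U(𝔤)`, generated by `E₁₀` and `E₀₁`. -/
noncomputable def raisingIdeal : Ideal (UniversalEnvelopingAlgebra ℂ L) :=
  Ideal.span {ιU g.E10, ιU g.E01}

lemma eqModN_iff_smodEq {f h : UniversalEnvelopingAlgebra ℂ L} :
    g.EqModN f h ↔ f ≡ h [SMOD g.raisingIdeal] := by
  simp only [SModEq.sub_mem, raisingIdeal, Ideal.mem_span_pair, EqModN, eq_comm]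

lemma ιU_E10_mem : ιU g.E10 ∈ g.raisingIdeal := Ideal.subset_span (by simp)

lemma ιU_E01_mem : ιU g.E01 ∈ g.raisingIdeal := Ideal.subset_span (by simp)

lemma ιU_E11_mem : ιU g.E11 ∈ g.raisingIdeal := ιU_lie_mem g.ιU_E10_mem g.ιU_E01_mem

lemma ιU_E21_mem : ιU g.E21 ∈ g.raisingIdeal := by
  rw [E21, ιU_smul]
  exact g.raisingIdeal.smul_of_tower_mem _ (ιU_lie_mem g.ιU_E11_mem g.ιU_E10_mem)

end RaisingIdeal

section LoweringU

lemma adU_iterate_uU (x : L) (n : ℕ) :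
    (adU x)^[n] g.uU = (3 : ℂ)⁻¹ • (adU x)^[n] (ιU g.E21 * ιU g.E21) -
      ((adU x)^[n] (ιU g.E31 * ιU g.E11) - (adU x)^[n] (ιU g.E32 * ιU g.E10)) := by
  simp only [adU_iterate, uU, aU, bU, map_sub, map_smul]

lemma adU_F21_iterate_four_uU :
    (adU g.F21)^[4] g.uU = (8 : ℂ) • (ιU g.F21 * ιU g.F21) + (24 : ℂ) • (ιU g.F32 * ιU g.F10) -
      (24 : ℂ) • (ιU g.F31 * ιU g.F11) := by
  have hE21 : ⁅g.F21, g.E21⁆ = -g.H21 := by rw [← lie_skew, lie_E21_F21]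
  have hH21 : ⁅g.F21, g.H21⁆ = (2 : ℂ) • g.F21 := by rw [← lie_skew, lie_H21_F21]; module
  have hE31 : ⁅g.F21, g.E31⁆ = g.E10 := by rw [← lie_skew, lie_E31_F21]; module
  have hE32 : ⁅g.F21, g.E32⁆ = g.E11 := by rw [← lie_skew, lie_E32_F21]; module
  have hE10 : ⁅g.F21, g.E10⁆ = (-2 : ℂ) • g.F11 := by rw [← lie_skew, lie_E10_F21]; module
  have hE11 : ⁅g.F21, g.E11⁆ = (2 : ℂ) • g.F10 := by rw [← lie_skew, lie_E11_F21]; module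
  have hF11 : ⁅g.F21, g.F11⁆ = (-3 : ℂ) • g.F32 := by rw [← lie_skew, lie_F11_F21]; module
  have hF10 : ⁅g.F21, g.F10⁆ = (-3 : ℂ) • g.F31 := by rw [← lie_skew, lie_F10_F21]; module
  have hF10F32 := ιU_mul_comm_of_lie_eq_zero g.lie_F10_F32
  have hF11F31 := ιU_mul_comm_of_lie_eq_zero g.lie_F11_F31
  simp only [adU_iterate_uU, adU_iterate_four_mul, hE21, hH21, hE31, hE32, hE10, hE11, hF11, hF10,
    lie_F21_F31, lie_F21_F32, lie_smul, lie_neg, lie_self, lie_zero, smul_zero, neg_zero, ιU_zero,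
    ιU_neg, ιU_smul, zero_mul, mul_zero, neg_mul_neg, smul_mul_assoc, mul_smul_comm, hF10F32,
    hF11F31]
  module

lemma adU_F31_iterate_two_uU_smodEq :
    (adU g.F31)^[2] g.uU ≡ (2 / 3 : ℂ) • (ιU g.F10 * ιU g.F10) [SMOD g.raisingIdeal] := by
  have hE21 : ⁅g.F31, g.E21⁆ = g.F10 := by rw [← lie_skew, lie_E21_F31]; module
  have hE11 : ⁅g.F31, g.E11⁆ = 0 := by rw [← lie_skew, lie_E11_F31, neg_zero]
  have hE32 : ⁅g.F31, g.E32⁆ = g.E01 := by rw [← lie_skew, lie_E32_F31]; module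
  have hE01 : ⁅g.F31, g.E01⁆ = 0 := by rw [← lie_skew, lie_E01_F31, neg_zero]
  have hE10 : ⁅g.F31, g.E10⁆ = -g.F21 := by rw [← lie_skew, lie_E10_F31]
  have hF10 : ⁅g.F31, g.F10⁆ = 0 := by rw [← lie_skew, lie_F10_F31, neg_zero]
  have hF21 : ⁅g.F31, g.F21⁆ = 0 := by rw [← lie_skew, lie_F21_F31, neg_zero]
  have exact_value : (adU g.F31)^[2] g.uU = (2 / 3 : ℂ) • (ιU g.F10 * ιU g.F10) -
      (ιU ⁅g.F31, ⁅g.F31, g.E31⁆⁆ * ιU g.E11 + (2 : ℂ) • (ιU g.F21 * ιU g.E01)) := by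
    simp only [adU_iterate_uU, adU_iterate_two_mul, hE21, hE11, hE32, hE01, hE10, hF10, hF21,
      lie_zero, lie_neg, neg_zero, ιU_zero, ιU_neg, zero_mul, mul_zero, mul_neg,
      ιU_mul_comm_of_lie_eq_zero g.lie_E01_F21]
    module
  rw [exact_value, SModEq.sub_mem, sub_sub_cancel_left]
  exact neg_mem (add_mem (g.raisingIdeal.mul_mem_left _ g.ιU_E11_mem)
    (g.raisingIdeal.smul_of_tower_mem _ (g.raisingIdeal.mul_mem_left _ g.ιU_E01_mem)))

lemma adU_F32_iterate_two_uU_smodEq :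
    (adU g.F32)^[2] g.uU ≡ (2 / 3 : ℂ) • (ιU g.F11 * ιU g.F11) + (2 : ℂ) • (ιU g.F21 * ιU g.F01)
      [SMOD g.raisingIdeal] := by
  have hE21 : ⁅g.F32, g.E21⁆ = g.F11 := by rw [← lie_skew, lie_E21_F32]; module
  have hE31 : ⁅g.F32, g.E31⁆ = g.F01 := by rw [← lie_skew, lie_E31_F32]; module
  have hE11 : ⁅g.F32, g.E11⁆ = -g.F21 := by rw [← lie_skew, lie_E11_F32]
  have hE10 : ⁅g.F32, g.E10⁆ = 0 := by rw [← lie_skew, lie_E10_F32, neg_zero]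
  have hF11 : ⁅g.F32, g.F11⁆ = 0 := by rw [← lie_skew, lie_F11_F32, neg_zero]
  have hF01 : ⁅g.F32, g.F01⁆ = 0 := by rw [← lie_skew, lie_F01_F32, neg_zero]
  have hF21 : ⁅g.F32, g.F21⁆ = 0 := by rw [← lie_skew, lie_F21_F32, neg_zero]
  have exact_value : (adU g.F32)^[2] g.uU = (2 / 3 : ℂ) • (ιU g.F11 * ιU g.F11) +
      (2 : ℂ) • (ιU g.F21 * ιU g.F01) + ιU ⁅g.F32, ⁅g.F32, g.E32⁆⁆ * ιU g.E10 := by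
    simp only [adU_iterate_uU, adU_iterate_two_mul, hE21, hE31, hE11, hE10, hF11, hF01, hF21,
      lie_zero, lie_neg, neg_zero, ιU_zero, ιU_neg, zero_mul, mul_zero, mul_neg,
      ιU_mul_comm_of_lie_eq_zero g.lie_F01_F21]
    module
  rw [exact_value, SModEq.sub_mem, add_sub_cancel_left]
  exact g.raisingIdeal.mul_mem_left _ g.ιU_E10_mem

end LoweringU

section Polynomials

lemma adU_E21_iterate_two_F32_mul_F10_smodEq :
    (adU g.E21)^[2] (ιU g.F32 * ιU g.F10) ≡ (2 : ℂ) • ιU g.H10 [SMOD g.raisingIdeal] := by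
  have hF32 : ⁅g.E21, ⁅g.E21, g.F32⁆⁆ = (2 : ℂ) • g.E10 := by
    rw [lie_E21_F32, lie_smul, lie_E21_F11]; module
  calc (adU g.E21)^[2] (ιU g.F32 * ιU g.F10)
      ≡ ιU ⁅g.E21, ⁅g.E21, g.F32⁆⁆ * ιU g.F10 [SMOD g.raisingIdeal] := by
        refine adU_iterate_two_mul_smodEq g.ιU_E21_mem _ ?_
        rw [lie_E21_F10, ιU_smul]
        exact g.raisingIdeal.smul_of_tower_mem _ g.ιU_E11_mem
    _ = (2 : ℂ) • (ιU g.E10 * ιU g.F10) := by rw [hF32, ιU_smul, smul_mul_assoc]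
    _ ≡ (2 : ℂ) • ιU g.H10 [SMOD g.raisingIdeal] :=
        smodEq_smul_of_tower (g.hE10F10 ▸ ιU_mul_smodEq_ιU_lie g.ιU_E10_mem _) _

lemma adU_E21_iterate_two_F31_mul_F11_smodEq :
    (adU g.E21)^[2] (ιU g.F31 * ιU g.F11) ≡ (-2 : ℂ) • ιU g.H11 [SMOD g.raisingIdeal] := by
  have hF31 : ⁅g.E21, ⁅g.E21, g.F31⁆⁆ = (-2 : ℂ) • g.E11 := by
    rw [lie_E21_F31, lie_smul, lie_E21_F10]; module
  calc (adU g.E21)^[2] (ιU g.F31 * ιU g.F11)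
      ≡ ιU ⁅g.E21, ⁅g.E21, g.F31⁆⁆ * ιU g.F11 [SMOD g.raisingIdeal] := by
        refine adU_iterate_two_mul_smodEq g.ιU_E21_mem _ ?_
        rw [lie_E21_F11, ιU_smul]
        exact g.raisingIdeal.smul_of_tower_mem _ g.ιU_E10_mem
    _ = (-2 : ℂ) • (ιU g.E11 * ιU g.F11) := by rw [hF31, ιU_smul, smul_mul_assoc]
    _ ≡ (-2 : ℂ) • ιU g.H11 [SMOD g.raisingIdeal] :=
        smodEq_smul_of_tower (g.lie_E11_F11 ▸ ιU_mul_smodEq_ιU_lie g.ιU_E11_mem _) _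

lemma adU_E11_iterate_two_F21_mul_F01_smodEq :
    (adU g.E11)^[2] (ιU g.F21 * ιU g.F01) ≡ (6 : ℂ) • ιU g.H01 [SMOD g.raisingIdeal] := by
  have hF21 : ⁅g.E11, ⁅g.E11, g.F21⁆⁆ = (6 : ℂ) • g.E01 := by
    rw [lie_E11_F21, lie_smul, lie_E11_F10]; module
  calc (adU g.E11)^[2] (ιU g.F21 * ιU g.F01)
      ≡ ιU ⁅g.E11, ⁅g.E11, g.F21⁆⁆ * ιU g.F01 [SMOD g.raisingIdeal] := by
        refine adU_iterate_two_mul_smodEq g.ιU_E11_mem _ ?_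
        rw [lie_E11_F01]
        exact g.ιU_E10_mem
    _ = (6 : ℂ) • (ιU g.E01 * ιU g.F01) := by rw [hF21, ιU_smul, smul_mul_assoc]
    _ ≡ (6 : ℂ) • ιU g.H01 [SMOD g.raisingIdeal] :=
        smodEq_smul_of_tower (g.hE01F01 ▸ ιU_mul_smodEq_ιU_lie g.ιU_E01_mem _) _

lemma adU_E21_F21_uU_smodEq :
    (adU g.E21)^[2] ((adU g.F21)^[4] g.uU) ≡ (16 : ℂ) • (ιU g.H21 * (ιU g.H21 + 2))
      [SMOD g.raisingIdeal] := by
  have hH21 : ιU g.H21 = ιU g.H10 + ιU g.H11 := by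
    rw [← ιU_add, H21, H11]; congr 1; module
  calc (adU g.E21)^[2] ((adU g.F21)^[4] g.uU)
      = (8 : ℂ) • (adU g.E21)^[2] (ιU g.F21 * ιU g.F21) +
          (24 : ℂ) • (adU g.E21)^[2] (ιU g.F32 * ιU g.F10) -
          (24 : ℂ) • (adU g.E21)^[2] (ιU g.F31 * ιU g.F11) := by
        simp only [adU_F21_iterate_four_uU, adU_iterate, map_add, map_sub, map_smul]
    _ ≡ (8 : ℂ) • (2 : ℂ) • (ιU g.H21 * (ιU g.H21 - 1)) + (24 : ℂ) • (2 : ℂ) • ιU g.H10 -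
          (24 : ℂ) • (-2 : ℂ) • ιU g.H11 [SMOD g.raisingIdeal] := by
        gcongr
        · exact adU_iterate_two_mul_self_smodEq g.lie_E21_F21 g.lie_H21_E21 g.ιU_E21_mem
        · exact g.adU_E21_iterate_two_F32_mul_F10_smodEq
        · exact g.adU_E21_iterate_two_F31_mul_F11_smodEq
    _ = (16 : ℂ) • (ιU g.H21 * (ιU g.H21 - 1)) + (48 : ℂ) • ιU g.H21 := by
        rw [hH21]; module
    _ = (16 : ℂ) • (ιU g.H21 * (ιU g.H21 + 2)) := by
        simp only [mul_sub, mul_add, mul_one, mul_two]; module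

lemma adU_E10_F31_uU_smodEq :
    (adU g.E10)^[2] ((adU g.F31)^[2] g.uU) ≡ (4 / 3 : ℂ) • (ιU g.H10 * (ιU g.H10 - 1))
      [SMOD g.raisingIdeal] :=
  calc (adU g.E10)^[2] ((adU g.F31)^[2] g.uU)
      ≡ (adU g.E10)^[2] ((2 / 3 : ℂ) • (ιU g.F10 * ιU g.F10)) [SMOD g.raisingIdeal] :=
        adU_iterate_smodEq g.ιU_E10_mem g.adU_F31_iterate_two_uU_smodEq 2
    _ = (2 / 3 : ℂ) • (adU g.E10)^[2] (ιU g.F10 * ιU g.F10) := by rw [adU_iterate, map_smul]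
    _ ≡ (2 / 3 : ℂ) • (2 : ℂ) • (ιU g.H10 * (ιU g.H10 - 1)) [SMOD g.raisingIdeal] := by
        gcongr
        exact adU_iterate_two_mul_self_smodEq g.hE10F10 g.hH10E10 g.ιU_E10_mem
    _ = (4 / 3 : ℂ) • (ιU g.H10 * (ιU g.H10 - 1)) := by module

lemma adU_E11_F32_uU_smodEq :
    (adU g.E11)^[2] ((adU g.F32)^[2] g.uU) ≡
      (4 : ℂ) • ((3 : ℂ)⁻¹ • (ιU g.H11 * (ιU g.H11 - 1)) + (3 : ℂ) • ιU g.H01)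
      [SMOD g.raisingIdeal] :=
  calc (adU g.E11)^[2] ((adU g.F32)^[2] g.uU)
      ≡ (adU g.E11)^[2] ((2 / 3 : ℂ) • (ιU g.F11 * ιU g.F11) +
          (2 : ℂ) • (ιU g.F21 * ιU g.F01)) [SMOD g.raisingIdeal] :=
        adU_iterate_smodEq g.ιU_E11_mem g.adU_F32_iterate_two_uU_smodEq 2
    _ = (2 / 3 : ℂ) • (adU g.E11)^[2] (ιU g.F11 * ιU g.F11) +
          (2 : ℂ) • (adU g.E11)^[2] (ιU g.F21 * ιU g.F01) := by
        simp only [adU_iterate, map_add, map_smul]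
    _ ≡ (2 / 3 : ℂ) • (2 : ℂ) • (ιU g.H11 * (ιU g.H11 - 1)) + (2 : ℂ) • (6 : ℂ) • ιU g.H01
          [SMOD g.raisingIdeal] := by
        gcongr
        · exact adU_iterate_two_mul_self_smodEq g.lie_E11_F11 g.lie_H11_E11 g.ιU_E11_mem
        · exact g.adU_E11_iterate_two_F21_mul_F01_smodEq
    _ = (4 : ℂ) • ((3 : ℂ)⁻¹ • (ιU g.H11 * (ιU g.H11 - 1)) + (3 : ℂ) • ιU g.H01) := by module

end Polynomials

end G2Gens

/-- **Lemma 3.3 (lem-first-case).**  With `u = (1/3)a² − b` (the image under Zhu's map of the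
singular vector of `N(−5/3, 0)` of type `G₂⁽¹⁾`), the polynomials `q(H) = H₂₁(H₂₁+2)`,
`p₁(H) = H₁₀(H₁₀−1)` and `p₂(H) = (1/3)H₁₁(H₁₁−1) + 3H₀₁` arise, up to nonzero rational
constants, from `u` modulo `U(𝔤)𝔫₊`. -/
theorem G2Gens.level_minus_five_thirds_polynomials
    {L : Type*} [LieRing L] [LieAlgebra ℂ L] (g : G2Gens L) :
    ∃ C C₁ C₂ : ℚ, C ≠ 0 ∧ C₁ ≠ 0 ∧ C₂ ≠ 0 ∧
      g.EqModN ((adU g.E21)^[2] ((adU g.F21)^[4] g.uU))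
        ((C : ℂ) • (ιU g.H21 * (ιU g.H21 + 2))) ∧
      g.EqModN ((adU g.E10)^[2] ((adU g.F31)^[2] g.uU))
        ((C₁ : ℂ) • (ιU g.H10 * (ιU g.H10 - 1))) ∧
      g.EqModN ((adU g.E11)^[2] ((adU g.F32)^[2] g.uU))
        ((C₂ : ℂ) • ((3 : ℂ)⁻¹ • (ιU g.H11 * (ιU g.H11 - 1)) + (3 : ℂ) • ιU g.H01)) := by
  refine ⟨16, 4 / 3, 4, by norm_num, by norm_num, by norm_num, ?_, ?_, ?_⟩ <;>
    rw [eqModN_iff_smodEq] <;> push_cast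
  · exact g.adU_E21_F21_uU_smodEq
  · exact g.adU_E10_F31_uU_smodEq
  · exact g.adU_E11_F32_uU_smodEq
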